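/- arXiv:1710.01427 — 9 statements merged into one kernel-verified Lean document; each statement's English description precedes it below -/
import Mathlib

section
/- Let n ≥ 1, α = √((n+1)/n), β = 1/(n+1), γ = (1/n)(1 ± √β), V = α(I − γ·e·eᵀ) ∈ ℝ^{n×n}, and let V₊ = [V, −V·e] ∈ ℝ^{n×(n+1)} be V augmented with the extra column v_{n+1} = −V·e. Then the n+1 columns v₁, …, v_{n+1} of V₊ form a minimal positive basis of ℝⁿ with uniform angles; that is: (i) every x ∈ ℝⁿ can be written as a nonnegative linear combination of v₁, …, v_{n+1}; and (ii) V₊ᵀV₊ ∈ ℝ^{(n+1)×(n+1)} has every diagonal entry equal to 1 and every off-diagonal entry equal to −1/n (so each column has unit Euclidean norm and vᵢᵀvⱼ = −1/n for all i ≠ j). -/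
open Matrix

/-- The columns of `V₊ = [V, −Ve]` form a minimal positive basis
of ℝⁿ with uniform angles: (i) every `x ∈ ℝⁿ` is a nonnegative combination of
the `n+1` columns, and (ii) `V₊ᵀV₊` has unit diagonal and off-diagonal entries
`−1/n`. -/
theorem stmt_5 (n : ℕ) (hn : 1 ≤ n)
    (α β γ : ℝ)
    (hα : α = Real.sqrt ((n + 1) / n))
    (hβ : β = 1 / (n + 1))
    (hγ : γ = (1 / n) * (1 - Real.sqrt β) ∨ γ = (1 / n) * (1 + Real.sqrt β))
    (e : Fin n → ℝ) (he : e = fun _ => 1)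
    (V : Matrix (Fin n) (Fin n) ℝ)
    (hV : V = α • ((1 : Matrix (Fin n) (Fin n) ℝ) - γ • Matrix.vecMulVec e e))
    (Vp : Matrix (Fin n) (Fin (n + 1)) ℝ)
    (hVp : ∀ (i : Fin n) (j : Fin (n + 1)),
      Vp i j = if hj : (j : ℕ) < n then V i ⟨j, hj⟩ else -(V.mulVec e i)) :
    (∀ x : Fin n → ℝ, ∃ c : Fin (n + 1) → ℝ, (∀ j, 0 ≤ c j) ∧ x = Vp.mulVec c) ∧
    (∀ j, (Vpᵀ * Vp) j j = 1) ∧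
    (∀ i j, i ≠ j → (Vpᵀ * Vp) i j = -1 / n) := by
  have hn0 : (n : ℝ) ≠ 0 := by
    have : n ≠ 0 := by omega
    exact_mod_cast this
  have hn1 : (n : ℝ) + 1 ≠ 0 := by positivity
  have hα2 : α * α = (n + 1) / n := by
    rw [hα]; exact Real.mul_self_sqrt (by positivity)
  have hα0 : α ≠ 0 := by
    intro h
    rw [h] at hα2
    have : ((n : ℝ) + 1) / n ≠ 0 := div_ne_zero hn1 hn0
    exact this (by rw [← hα2]; ring)
  have hs : Real.sqrt β * Real.sqrt β = 1 / (n + 1) := by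
    rw [← hβ]; exact Real.mul_self_sqrt (by rw [hβ]; positivity)
  obtain ⟨t, ht⟩ : ∃ t, t = 1 - n * γ := ⟨_, rfl⟩
  have ht2 : t * t = 1 / (n + 1) := by
    rw [ht, ← hs]
    rcases hγ with h | h <;> rw [h] <;> field_simp <;> ring
  have ht0 : t ≠ 0 := by
    intro h
    rw [h] at ht2
    have : (1 : ℝ) / (n + 1) ≠ 0 := div_ne_zero one_ne_zero hn1
    exact this (by rw [← ht2]; ring)
  have hat : α * α * (t * t) = 1 / n := by
    rw [hα2, ht2]; field_simp
  have hg : α * α * (n * γ * γ - 2 * γ) = - 1 / n := by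
    have h1 : n * γ * γ - 2 * γ = (t * t - 1) / n := by
      rw [ht]; field_simp; ring
    rw [h1, hα2, ht2]; field_simp; ring
  have hVij : ∀ i j, V i j = α * ((if i = j then 1 else 0) - γ) := by
    intro i j
    rw [hV, he]
    simp [Matrix.vecMulVec_apply, Matrix.one_apply]
  have hVe : ∀ i, V.mulVec e i = α * t := by
    intro i
    simp [Matrix.mulVec, dotProduct, hVij, he, ← Finset.mul_sum, Finset.sum_sub_distrib, ht]
  have hc : ∀ i (j : Fin n), Vp i j.castSucc = α * ((if i = j then 1 else 0) - γ) := by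
    intro i j
    rw [hVp]; simp [hVij]
  have hl : ∀ i, Vp i (Fin.last n) = -(α * t) := by
    intro i
    rw [hVp]; simp [hVe]
  have hsum : ∀ j : Fin n, ∑ i : Fin n, ((if i = j then (1 : ℝ) else 0) - γ) = t := by
    intro j
    simp [Finset.sum_sub_distrib, ht]
  have hcl : ∀ j : Fin n, ∑ i, Vp i j.castSucc * Vp i (Fin.last n) = -1 / n := by
    intro j
    simp only [hc, hl]
    rw [← Finset.sum_mul, ← Finset.mul_sum, hsum, neg_div, ← hat]; ring
  have hcc : ∀ j k : Fin n, ∑ i, Vp i j.castSucc * Vp i k.castSucc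
      = α * α * (if j = k then 1 else 0) + -1 / n := by
    intro j k
    simp only [hc]
    have h1 : ∀ i : Fin n, α * ((if i = j then 1 else 0) - γ) * (α * ((if i = k then 1 else 0) - γ))
        = α * α * ((if i = j then (if i = k then 1 else 0) else 0)
          - γ * (if i = j then 1 else 0) - γ * (if i = k then 1 else 0) + γ * γ) := by
      intro i
      split_ifs <;> ring
    simp only [h1]
    rw [← Finset.mul_sum, ← hg]
    simp only [Finset.sum_add_distrib, Finset.sum_sub_distrib, ← Finset.mul_sum]
    simp
    split_ifs <;> ring
  refine ⟨?_, ?_, ?_⟩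
  · intro x
    obtain ⟨y, hy⟩ : ∃ y : Fin n → ℝ, y = fun j => x j / α + γ * (∑ k, x k) / (α * t) := ⟨_, rfl⟩
    have hM : ∀ j, 0 ≤ y j + ∑ k, |y k| := by
      intro j
      have h1 := Finset.single_le_sum (f := fun k => |y k|) (fun k _ => abs_nonneg _)
        (Finset.mem_univ j)
      have h2 := neg_abs_le (y j)
      linarith
    have hM0 : 0 ≤ ∑ k, |y k| := Finset.sum_nonneg (fun k _ => abs_nonneg _)
    generalize (∑ k, |y k|) = M at hM hM0
    refine ⟨Fin.snoc (α := fun _ => ℝ) (fun j => y j + M) M, ?_, ?_⟩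
    · intro j
      refine Fin.lastCases ?_ (fun j => ?_) j
      · simpa using hM0
      · simpa using hM j
    · funext i
      have hys : ∑ j, y j = (∑ k, x k) / (α * t) := by
        rw [hy, Finset.sum_add_distrib, ← Finset.sum_div]
        simp
        field_simp
        rw [ht]; ring
      simp only [Matrix.mulVec, dotProduct]
      rw [Fin.sum_univ_castSucc]
      simp only [Fin.snoc_castSucc, Fin.snoc_last, hc, hl]
      have h1 : ∀ j : Fin n, α * ((if i = j then 1 else 0) - γ) * (y j + M)
          = α * ((if i = j then y j else 0) - γ * y j) + α * M * ((if i = j then 1 else 0) - γ) := by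
        intro j
        split_ifs <;> ring
      simp only [h1]
      rw [Finset.sum_add_distrib, ← Finset.mul_sum, ← Finset.mul_sum, Finset.sum_sub_distrib,
        ← Finset.mul_sum, hys]
      have h2 : ∑ j : Fin n, ((if i = j then (1 : ℝ) else 0) - γ) = t := by
        simp [Finset.sum_sub_distrib, ht]
      rw [h2]
      simp [hy]
      field_simp
      ring
  · intro j
    simp only [Matrix.mul_apply, Matrix.transpose_apply]
    refine Fin.lastCases ?_ (fun j => ?_) j
    · simp only [hl]
      have : -(α * t) * -(α * t) = 1 / n := by rw [← hat]; ring
      simp only [this]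
      simp [hn0]
    · rw [hcc, hα2]; simp; field_simp; ring
  · intro i j hij
    simp only [Matrix.mul_apply, Matrix.transpose_apply]
    revert hij
    refine Fin.lastCases ?_ (fun i => ?_) i <;> refine Fin.lastCases ?_ (fun j => ?_) j
    · intro h; exact absurd rfl h
    · intro _
      rw [← hcl j]
      exact Finset.sum_congr rfl (fun _ _ => mul_comm _ _)
    · intro _; exact hcl i
    · intro h
      have : i ≠ j := fun hh => h (by rw [hh])
      rw [hcc]; simp [this]
end

section
/- Let n ≥ 1, let V ∈ ℝ^{n×n} be any matrix, let e denote an all-ones vector of appropriate size, and let V₊ = [V, −V·e] ∈ ℝ^{n×(n+1)}. For any scalars f₀, f₁, …, f_{n+1} ∈ ℝ, writing f = (f₁, …, fₙ)ᵀ ∈ ℝⁿ and δf₊ = (f₁ − f₀, …, f_{n+1} − f₀)ᵀ ∈ ℝ^{n+1}, one has V₊·δf₊ = V·(f − f_{n+1}·e). Consequently, any solution g of the normal equations V₊V₊ᵀ·g = (1/h)·V₊·δf₊ (for h > 0) is independent of the value f₀. -/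
open Matrix

/-- For any matrix `V` and `V₊ = [V, −Ve]`, one has
`V₊ δf₊ = V (f − f_{n+1} e)`; consequently the solutions of the normal
equations `V₊V₊ᵀ g = (1/h) V₊ δf₊` do not depend on the centroid value `f₀`. -/
theorem stmt_8 (n : ℕ) (hn : 1 ≤ n)
    (V : Matrix (Fin n) (Fin n) ℝ)
    (e : Fin n → ℝ) (he : e = fun _ => 1)
    (Vp : Matrix (Fin n) (Fin (n + 1)) ℝ)
    (hVp : ∀ (i : Fin n) (j : Fin (n + 1)),
      Vp i j = if hj : (j : ℕ) < n then V i ⟨j, hj⟩ else -(V.mulVec e i))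
    (f : Fin n → ℝ) (fnp1 f₀ f₀' : ℝ) (h : ℝ) (hh : 0 < h)
    (δ δ' : Fin (n + 1) → ℝ)
    (hδ : ∀ j : Fin (n + 1),
      δ j = (if hj : (j : ℕ) < n then f ⟨j, hj⟩ else fnp1) - f₀)
    (hδ' : ∀ j : Fin (n + 1),
      δ' j = (if hj : (j : ℕ) < n then f ⟨j, hj⟩ else fnp1) - f₀') :
    Vp.mulVec δ = V.mulVec (f - fnp1 • e) ∧
    (∀ g : Fin n → ℝ,
      (Vp * Vpᵀ).mulVec g = (1 / h) • Vp.mulVec δ ↔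
      (Vp * Vpᵀ).mulVec g = (1 / h) • Vp.mulVec δ') := by
  have key : ∀ (c : ℝ) (d : Fin (n + 1) → ℝ),
      (∀ j : Fin (n + 1), d j = (if hj : (j : ℕ) < n then f ⟨j, hj⟩ else fnp1) - c) →
      Vp.mulVec d = V.mulVec (f - fnp1 • e) := by
    intro c d hd
    subst he
    funext i
    simp only [Matrix.mulVec, dotProduct, Fin.sum_univ_castSucc, hVp, hd]
    simp only [Fin.val_castSucc, Fin.is_lt, dite_true, Fin.val_last, lt_irrefl, dite_false,
      Fin.eta, Pi.sub_apply, Pi.smul_apply, smul_eq_mul, mul_one]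
    rw [neg_mul, Finset.sum_mul, ← sub_eq_add_neg, ← Finset.sum_sub_distrib]
    exact Finset.sum_congr rfl fun j _ => by ring
  refine ⟨key f₀ δ hδ, fun g => ?_⟩
  rw [key f₀ δ hδ, key f₀' δ' hδ']
end

section
/- Let n ≥ 1, α = √((n+1)/n), β = 1/(n+1), γ = (1/n)(1 ± √β), V = α(I − γ·e·eᵀ) ∈ ℝ^{n×n}, and V₊ = [V, −V·e] ∈ ℝ^{n×(n+1)}. Then V₊·V₊ᵀ = α²·I. -/
open Matrix

/-- For the aligned positive basis `V₊ = [V, −Ve]` one has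
`V₊V₊ᵀ = α² I`. -/
theorem stmt_9 (n : ℕ) (hn : 1 ≤ n)
    (α β γ : ℝ)
    (hα : α = Real.sqrt ((n + 1) / n))
    (hβ : β = 1 / (n + 1))
    (hγ : γ = (1 / n) * (1 - Real.sqrt β) ∨ γ = (1 / n) * (1 + Real.sqrt β))
    (e : Fin n → ℝ) (he : e = fun _ => 1)
    (V : Matrix (Fin n) (Fin n) ℝ)
    (hV : V = α • ((1 : Matrix (Fin n) (Fin n) ℝ) - γ • Matrix.vecMulVec e e))
    (Vp : Matrix (Fin n) (Fin (n + 1)) ℝ)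
    (hVp : ∀ (i : Fin n) (j : Fin (n + 1)),
      Vp i j = if hj : (j : ℕ) < n then V i ⟨j, hj⟩ else -(V.mulVec e i)) :
    Vp * Vpᵀ = α ^ 2 • (1 : Matrix (Fin n) (Fin n) ℝ) := by
  have hn0 : (0 : ℝ) < n := by exact_mod_cast hn
  have hβ0 : 0 ≤ β := by rw [hβ]; positivity
  have hs : Real.sqrt β ^ 2 = β := Real.sq_sqrt hβ0
  have h1 : (1 - n * γ) ^ 2 = β := by
    rcases hγ with h | h
    · have : 1 - n * γ = Real.sqrt β := by rw [h]; field_simp; ring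
      rw [this, hs]
    · have : 1 - n * γ = -Real.sqrt β := by rw [h]; field_simp; ring
      rw [this, neg_sq, hs]
  have hb : β * (n + 1) = 1 := by rw [hβ]; field_simp
  have h2 : -2 * γ + n * γ ^ 2 + (1 - n * γ) ^ 2 = 0 := by
    have h3 : (n : ℝ) * (-2 * γ + n * γ ^ 2 + (1 - n * γ) ^ 2) = 0 := by
      linear_combination (n + 1 : ℝ) * h1 + hb
    exact (mul_eq_zero.mp h3).resolve_left hn0.ne'
  have hVe : ∀ i j, V i j = α * ((if i = j then 1 else 0) - γ) := by
    intro i j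
    simp [hV, he, Matrix.vecMulVec_apply, Matrix.one_apply]
  have hVv : ∀ i, V.mulVec e i = α * (1 - n * γ) := by
    intro i
    simp only [Matrix.mulVec, dotProduct, hVe, he, mul_one]
    rw [← Finset.mul_sum, Finset.sum_sub_distrib]
    simp
  have hsum : ∀ i k : Fin n, ∑ j, V i j * V k j
      = α ^ 2 * ((if i = k then 1 else 0) - 2 * γ + n * γ ^ 2) := by
    intro i k
    have : ∀ j, V i j * V k j = α ^ 2 * ((if i = j then (if k = j then 1 else 0) else 0)
        - γ * (if i = j then 1 else 0) - γ * (if k = j then 1 else 0) + γ ^ 2) := by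
      intro j
      rw [hVe, hVe]
      split_ifs <;> ring
    simp only [this]
    rw [← Finset.mul_sum, Finset.sum_add_distrib, Finset.sum_sub_distrib,
      Finset.sum_sub_distrib, ← Finset.mul_sum, ← Finset.mul_sum]
    simp only [Finset.sum_ite_eq, Finset.mem_univ, if_true, Finset.sum_const,
      Finset.card_univ, Fintype.card_fin, nsmul_eq_mul, eq_comm (a := k) (b := i)]
    ring
  ext i k
  rw [Matrix.mul_apply, Fin.sum_univ_castSucc]
  simp only [Matrix.transpose_apply, hVp, Fin.val_castSucc, Fin.is_lt, dif_pos, Fin.eta,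
    Fin.val_last, lt_irrefl, dif_neg, not_false_eq_true, hVv, hsum, Matrix.smul_apply,
    Matrix.one_apply, smul_eq_mul]
  linear_combination α ^ 2 * h2
end

section
/- Let n ≥ 1, h > 0, α = √((n+1)/n), β = 1/(n+1), γ = (1/n)(1 ± √β), V = α(I − γ·e·eᵀ) ∈ ℝ^{n×n}, and V₊ = [V, −V·e] ∈ ℝ^{n×(n+1)}. Given scalars f₀, f₁, …, f_{n+1} ∈ ℝ, set f = (f₁, …, fₙ)ᵀ ∈ ℝⁿ, δf₊ = (f₁ − f₀, …, f_{n+1} − f₀)ᵀ ∈ ℝ^{n+1}, c₁ = 1/(hα), and c₂ = c₁·((γn − 1)·f_{n+1} − γ·(eᵀf)). Then the vector g = c₁·f + c₂·e is the unique solution of the normal equations V₊V₊ᵀ·g = (1/h)·V₊·δf₊. -/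
open Matrix

/-- The aligned regular simplex gradient `g = c₁ f + c₂ e`, with
`c₁ = 1/(hα)` and `c₂ = c₁((γn − 1) f_{n+1} − γ eᵀf)`, is the unique solution
of the normal equations `V₊V₊ᵀ g = (1/h) V₊ δf₊`. -/
theorem stmt_10 (n : ℕ) (hn : 1 ≤ n)
    (α β γ h : ℝ) (hh : 0 < h)
    (hα : α = Real.sqrt ((n + 1) / n))
    (hβ : β = 1 / (n + 1))
    (hγ : γ = (1 / n) * (1 - Real.sqrt β) ∨ γ = (1 / n) * (1 + Real.sqrt β))
    (e : Fin n → ℝ) (he : e = fun _ => 1)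
    (V : Matrix (Fin n) (Fin n) ℝ)
    (hV : V = α • ((1 : Matrix (Fin n) (Fin n) ℝ) - γ • Matrix.vecMulVec e e))
    (Vp : Matrix (Fin n) (Fin (n + 1)) ℝ)
    (hVp : ∀ (i : Fin n) (j : Fin (n + 1)),
      Vp i j = if hj : (j : ℕ) < n then V i ⟨j, hj⟩ else -(V.mulVec e i))
    (f : Fin n → ℝ) (fnp1 f₀ : ℝ)
    (δ : Fin (n + 1) → ℝ)
    (hδ : ∀ j : Fin (n + 1),
      δ j = (if hj : (j : ℕ) < n then f ⟨j, hj⟩ else fnp1) - f₀)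
    (c₁ c₂ : ℝ)
    (hc₁ : c₁ = 1 / (h * α))
    (hc₂ : c₂ = c₁ * ((γ * n - 1) * fnp1 - γ * (∑ j, f j))) :
    ∀ g : Fin n → ℝ,
      (Vp * Vpᵀ).mulVec g = (1 / h) • Vp.mulVec δ ↔ g = c₁ • f + c₂ • e := by
  have hn0 : (0 : ℝ) < n := by exact_mod_cast hn
  have hα0 : 0 < α := by rw [hα]; positivity
  have hβ0 : 0 ≤ β := by rw [hβ]; positivity
  have hs : (1 - γ * n) ^ 2 = β := by
    have h1 := Real.sq_sqrt hβ0
    rcases hγ with h2 | h2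
    · have : 1 - γ * n = Real.sqrt β := by rw [h2]; field_simp; ring
      rw [this, h1]
    · have : 1 - γ * n = -Real.sqrt β := by rw [h2]; field_simp; ring
      rw [this, neg_sq, h1]
  have hk : γ ^ 2 * n - 2 * γ + (1 - γ * n) ^ 2 = 0 := by
    have h3 : (n : ℝ) * (γ ^ 2 * n - 2 * γ) = β - 1 := by rw [← hs]; ring
    have h4 : (n : ℝ) * (γ ^ 2 * n - 2 * γ + (1 - γ * n) ^ 2) = 0 := by
      rw [hs, mul_add, h3, hβ]; field_simp; ring
    exact (mul_eq_zero.mp h4).resolve_left hn0.ne'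
  have hVe : ∀ i j, V i j = α * ((if i = j then 1 else 0) - γ) := by
    intro i j
    simp [hV, he, Matrix.vecMulVec_apply, Matrix.one_apply]
  have hVs : ∀ i, V.mulVec e i = α * (1 - γ * n) := by
    intro i
    simp only [Matrix.mulVec, dotProduct, hVe, he, mul_one]
    rw [← Finset.mul_sum, Finset.sum_sub_distrib]
    simp
    left; ring
  have hp1 : ∀ i (j : Fin n), Vp i j.castSucc = α * ((if i = j then 1 else 0) - γ) := by
    intro i j
    rw [hVp]; simp [hVe]
  have hp2 : ∀ i, Vp i (Fin.last n) = -(α * (1 - γ * n)) := by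
    intro i
    rw [hVp]; simp [hVs]
  have hM : Vp * Vpᵀ = (α ^ 2) • (1 : Matrix (Fin n) (Fin n) ℝ) := by
    ext i k
    rw [Matrix.mul_apply, Fin.sum_univ_castSucc]
    simp only [Matrix.transpose_apply, hp1, hp2, Matrix.smul_apply, Matrix.one_apply, smul_eq_mul]
    have h5 : ∀ j : Fin n, α * ((if i = j then 1 else 0) - γ) * (α * ((if k = j then 1 else 0) - γ))
        = α ^ 2 * ((if i = j then (if k = j then 1 else 0) else 0)
          - γ * (if i = j then 1 else 0) - γ * (if k = j then 1 else 0) + γ ^ 2) := by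
      intro j; split_ifs <;> ring
    rw [Finset.sum_congr rfl (fun j _ => h5 j), ← Finset.mul_sum]
    simp only [Finset.sum_add_distrib, Finset.sum_sub_distrib, ← Finset.mul_sum,
      Finset.sum_ite_eq, Finset.mem_univ, if_true, Finset.sum_const, Finset.card_univ,
      Fintype.card_fin, nsmul_eq_mul]
    rw [show (if k = i then (1 : ℝ) else 0) = if i = k then 1 else 0 by simp only [eq_comm]]
    linear_combination α ^ 2 * hk
  have hR : ∀ i, Vp.mulVec δ i = α * (f i + ((γ * n - 1) * fnp1 - γ * (∑ j, f j))) := by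
    intro i
    simp only [Matrix.mulVec, dotProduct]
    rw [Fin.sum_univ_castSucc]
    simp only [hp1, hp2, hδ, Fin.val_castSucc, Fin.is_lt, dif_pos, Fin.val_last, lt_irrefl,
      dif_neg, not_false_eq_true, Fin.eta]
    have h5 : ∀ j : Fin n, α * ((if i = j then 1 else 0) - γ) * (f j - f₀)
        = α * ((if i = j then f j else 0) - f₀ * (if i = j then 1 else 0) - γ * f j + γ * f₀) := by
      intro j; split_ifs <;> ring
    rw [Finset.sum_congr rfl (fun j _ => h5 j), ← Finset.mul_sum]
    simp only [Finset.sum_add_distrib, Finset.sum_sub_distrib, ← Finset.mul_sum,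
      Finset.sum_ite_eq, Finset.mem_univ, if_true, Finset.sum_const, Finset.card_univ,
      Fintype.card_fin, nsmul_eq_mul]
    ring
  intro g
  rw [hM, Matrix.smul_mulVec, Matrix.one_mulVec, funext_iff, funext_iff]
  refine forall_congr' fun i => ?_
  simp only [Pi.smul_apply, Pi.add_apply, smul_eq_mul, hR, he, mul_one, hc₂, ← mul_add, hc₁]
  generalize f i + ((γ * n - 1) * fnp1 - γ * (∑ j, f j)) = t
  constructor
  · intro h6
    field_simp at h6 ⊢
    linarith
  · intro h6
    rw [h6]; field_simp
end

section
/- Let n ≥ 1, α = √((n+1)/n), β = 1/(n+1), γ = (1/n)(1 ± √β), and V = α(I − γ·e·eᵀ) ∈ ℝ^{n×n}. Then V² + V·e·eᵀ·V = α²·I. Consequently, for any h > 0 and scalars f₁, …, f_{n+1} with f = (f₁, …, fₙ)ᵀ, a vector g ∈ ℝⁿ satisfies the square system (V + e·eᵀ·V)·g = (1/h)·(f − f_{n+1}·e) if and only if g = (1/(hα²))·V·(f − f_{n+1}·e). -/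
open Matrix

/-- `V² + V e eᵀ V = α² I`, and therefore `g` solves the square
system `(V + e eᵀ V) g = (1/h)(f − f_{n+1} e)` if and only if
`g = (1/(hα²)) V (f − f_{n+1} e)`. -/
theorem stmt_11 (n : ℕ) (hn : 1 ≤ n)
    (α β γ : ℝ)
    (hα : α = Real.sqrt ((n + 1) / n))
    (hβ : β = 1 / (n + 1))
    (hγ : γ = (1 / n) * (1 - Real.sqrt β) ∨ γ = (1 / n) * (1 + Real.sqrt β))
    (e : Fin n → ℝ) (he : e = fun _ => 1)
    (V : Matrix (Fin n) (Fin n) ℝ)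
    (hV : V = α • ((1 : Matrix (Fin n) (Fin n) ℝ) - γ • Matrix.vecMulVec e e)) :
    V * V + V * Matrix.vecMulVec e e * V = α ^ 2 • (1 : Matrix (Fin n) (Fin n) ℝ) ∧
    (∀ (h : ℝ), 0 < h → ∀ (f : Fin n → ℝ) (fnp1 : ℝ) (g : Fin n → ℝ),
      ((V + Matrix.vecMulVec e e * V).mulVec g = (1 / h) • (f - fnp1 • e) ↔
        g = (1 / (h * α ^ 2)) • V.mulVec (f - fnp1 • e))) := by
  have hn0 : (0 : ℝ) < n := by exact_mod_cast hn
  have hα2 : α ^ 2 = (n + 1) / n := by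
    rw [hα, Real.sq_sqrt (by positivity)]
  have hα0 : α ^ 2 ≠ 0 := by rw [hα2]; positivity
  have hs : (Real.sqrt β) ^ 2 = 1 / (n + 1) := by
    rw [Real.sq_sqrt (by rw [hβ]; positivity), hβ]
  have hs' : (Real.sqrt β) ^ 2 * (n + 1) = 1 := by
    rw [hs]; field_simp
  have hK : -2 * γ + γ ^ 2 * n + (1 - γ * n) ^ 2 = 0 := by
    rcases hγ with h | h
    · rw [h]; field_simp; linear_combination hs'
    · rw [h]; field_simp; linear_combination hs'
  have hJ : vecMulVec e e * vecMulVec e e = (n : ℝ) • vecMulVec e e := by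
    ext i j
    simp [Matrix.mul_apply, vecMulVec_apply, he]
  have h1 : V * V + V * vecMulVec e e * V = α ^ 2 • (1 : Matrix (Fin n) (Fin n) ℝ) := by
    rw [hV]
    generalize vecMulVec e e = J at hJ
    simp only [smul_mul_assoc, mul_smul_comm, sub_mul, mul_sub, one_mul, mul_one, hJ, smul_sub,
      smul_smul]
    have : (α ^ 2 * (-2 * γ + γ ^ 2 * n + (1 - γ * n) ^ 2)) • J = 0 := by rw [hK]; simp
    rw [← sub_eq_zero, ← this]
    module
  refine ⟨h1, ?_⟩
  intro h hh f c g
  generalize f - c • e = b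
  have h2 : V * (V + vecMulVec e e * V) = α ^ 2 • (1 : Matrix (Fin n) (Fin n) ℝ) := by
    rw [mul_add, ← mul_assoc, h1]
  have h3 : ((α ^ 2)⁻¹ • V) * (V + vecMulVec e e * V) = 1 := by
    rw [smul_mul_assoc, h2, smul_smul, inv_mul_cancel₀ hα0, one_smul]
  have h4 := mul_eq_one_comm.mp h3
  have hc : 1 / (h * α ^ 2) = (1 / h) * (α ^ 2)⁻¹ := by field_simp
  have h5 : (1 / (h * α ^ 2)) • V.mulVec b = ((α ^ 2)⁻¹ • V).mulVec ((1 / h) • b) := by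
    rw [Matrix.mulVec_smul, Matrix.smul_mulVec, smul_smul, hc]
  rw [h5]
  constructor
  · intro H
    rw [← H, Matrix.mulVec_mulVec, h3, Matrix.one_mulVec]
  · intro H
    rw [H, Matrix.mulVec_mulVec, h4, Matrix.one_mulVec]
end

section
/- Let n ≥ 1, h > 0, α = √((n+1)/n), β = 1/(n+1), γ = (1/n)(1 ± √β), V = α(I − γ·e·eᵀ), and V₊ = [V, −V·e] with columns v₁, …, v_{n+1}. Let x₀ ∈ ℝⁿ and set x_j = x₀ + h·v_j for j = 1, …, n+1. Suppose f : ℝⁿ → ℝ is continuously differentiable on an open set Ω containing the closed ball of radius h centered at x₀, and ∇f is Lipschitz continuous on Ω with constant L > 0. Let f_j = f(x_j) for j = 0, 1, …, n+1, δf₊ = (f₁ − f₀, …, f_{n+1} − f₀)ᵀ, and let g be the solution of V₊V₊ᵀ·g = (1/h)·V₊·δf₊ (i.e. g = (1/(hα²))·V₊·δf₊). Then ‖∇f(x₀) − g‖₂ ≤ (1/2)·L·h·√n. -/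
open Matrix


theorem aux_taylor {E : Type*} [NormedAddCommGroup E] [InnerProductSpace ℝ E] [CompleteSpace E]
    (f : E → ℝ) (Ω : Set E) (hΩ : IsOpen Ω) (x₀ d : E) (h L : ℝ) (hd : ‖d‖ ≤ h)
    (hball : Metric.closedBall x₀ h ⊆ Ω) (hf : ContDiffOn ℝ 1 f Ω)
    (hLip : ∀ y ∈ Ω, ∀ z ∈ Ω, ‖gradient f y - gradient f z‖ ≤ L * ‖y - z‖) :
    |f (x₀ + d) - f x₀ - inner ℝ (gradient f x₀) d| ≤ L / 2 * ‖d‖ ^ 2 := by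
  have hmem : ∀ t ∈ Set.Icc (0:ℝ) 1, x₀ + t • d ∈ Ω := by
    intro t ht
    apply hball
    rw [Metric.mem_closedBall, dist_eq_norm, add_sub_cancel_left, norm_smul, Real.norm_eq_abs,
      abs_of_nonneg ht.1]
    nlinarith [norm_nonneg d, ht.1, ht.2]
  have h0 : x₀ ∈ Ω := by simpa using hmem 0 (by simp)
  have hder : ∀ t ∈ Set.Icc (0:ℝ) 1, HasDerivAt
      (fun t : ℝ => f (x₀ + t • d) - f x₀ - t * inner ℝ (gradient f x₀) d)
      (inner ℝ (gradient f (x₀ + t • d) - gradient f x₀) d) t := by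
    intro t ht
    have h1 : DifferentiableAt ℝ f (x₀ + t • d) :=
      (hf.contDiffAt (hΩ.mem_nhds (hmem t ht))).differentiableAt (by norm_num)
    have h2 := h1.hasGradientAt.hasFDerivAt
    have h3 : HasDerivAt (fun t : ℝ => x₀ + t • d) d t := by
      simpa using ((hasDerivAt_id t).smul_const d).const_add x₀
    have h4 := h2.comp_hasDerivAt t h3
    have h5 := (h4.sub_const (f x₀)).sub ((hasDerivAt_id t).mul_const (inner ℝ (gradient f x₀) d))
    refine h5.congr_deriv ?_
    simp [inner_sub_left]
  have key := image_norm_le_of_norm_deriv_right_le_deriv_boundary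
    (f := fun t : ℝ => f (x₀ + t • d) - f x₀ - t * inner ℝ (gradient f x₀) d)
    (f' := fun t => inner ℝ (gradient f (x₀ + t • d) - gradient f x₀) d)
    (a := 0) (b := 1) (B := fun t => L / 2 * ‖d‖ ^ 2 * t ^ 2) (B' := fun t => L * ‖d‖ ^ 2 * t)
    (fun t ht => (hder t ht).continuousAt.continuousWithinAt)
    (fun t ht => (hder t (Set.Ico_subset_Icc_self ht)).hasDerivWithinAt)
    (by simp)
    (by
      intro t
      refine ((hasDerivAt_pow 2 t).const_mul (L / 2 * ‖d‖ ^ 2)).congr_deriv ?_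
      simp
      ring)
    (by
      intro t ht
      have h1 := hLip _ (hmem t (Set.Ico_subset_Icc_self ht)) _ h0
      rw [add_sub_cancel_left, norm_smul, Real.norm_eq_abs, abs_of_nonneg ht.1] at h1
      calc _ ≤ _ := norm_inner_le_norm _ _
        _ ≤ (L * (t * ‖d‖)) * ‖d‖ := by gcongr
        _ = _ := by ring)
    (x := 1) (by simp)
  simpa using key

/-- Error bound at the centroid: for the aligned regular simplex
of radius `h` and centroid `x₀`, if `f` is `C¹` on an open set `Ω ⊇ B̄(x₀, h)`
with `L`-Lipschitz gradient on `Ω`, then the aligned regular simplex gradient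
`g = (1/(hα²)) V₊ δf₊` satisfies `‖∇f(x₀) − g‖₂ ≤ (1/2) L h √n`. -/
theorem stmt_12 (n : ℕ) (hn : 1 ≤ n)
    (α β γ h L : ℝ) (hh : 0 < h) (hL : 0 < L)
    (hα : α = Real.sqrt ((n + 1) / n))
    (hβ : β = 1 / (n + 1))
    (hγ : γ = (1 / n) * (1 - Real.sqrt β) ∨ γ = (1 / n) * (1 + Real.sqrt β))
    (e : Fin n → ℝ) (he : e = fun _ => 1)
    (V : Matrix (Fin n) (Fin n) ℝ)
    (hV : V = α • ((1 : Matrix (Fin n) (Fin n) ℝ) - γ • Matrix.vecMulVec e e))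
    (Vp : Matrix (Fin n) (Fin (n + 1)) ℝ)
    (hVp : ∀ (i : Fin n) (j : Fin (n + 1)),
      Vp i j = if hj : (j : ℕ) < n then V i ⟨j, hj⟩ else -(V.mulVec e i))
    (x₀ : EuclideanSpace ℝ (Fin n))
    (x : Fin (n + 1) → EuclideanSpace ℝ (Fin n))
    (hx : ∀ (j : Fin (n + 1)) (i : Fin n), x j i = x₀ i + h * Vp i j)
    (f : EuclideanSpace ℝ (Fin n) → ℝ)
    (Ω : Set (EuclideanSpace ℝ (Fin n)))
    (hΩopen : IsOpen Ω)
    (hball : Metric.closedBall x₀ h ⊆ Ω)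
    (hf : ContDiffOn ℝ 1 f Ω)
    (hLip : ∀ y ∈ Ω, ∀ z ∈ Ω, ‖gradient f y - gradient f z‖ ≤ L * ‖y - z‖)
    (δ : Fin (n + 1) → ℝ)
    (hδ : ∀ j, δ j = f (x j) - f x₀)
    (g : EuclideanSpace ℝ (Fin n))
    (hg : ∀ i, g i = (1 / (h * α ^ 2)) * Vp.mulVec δ i) :
    ‖gradient f x₀ - g‖ ≤ (1 / 2) * L * h * Real.sqrt n := by
  have hn0 : (0:ℝ) < n := by exact_mod_cast hn
  have hα2 : α ^ 2 = (n + 1) / n := by rw [hα, Real.sq_sqrt (by positivity)]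
  obtain ⟨s, hs, hγs⟩ : ∃ s : ℝ, s ^ 2 = 1 / (n + 1) ∧ γ = (1 + s) / n := by
    have : Real.sqrt β ^ 2 = 1 / (n + 1) := by rw [hβ, Real.sq_sqrt (by positivity)]
    rcases hγ with h1 | h1
    · exact ⟨-Real.sqrt β, by rw [neg_sq, this], by rw [h1]; ring⟩
    · exact ⟨Real.sqrt β, this, by rw [h1]; ring⟩
  have hVe : ∀ i k, V i k = α * ((if i = k then 1 else 0) - γ) := by
    intro i k
    simp [hV, he, Matrix.vecMulVec_apply, Matrix.one_apply]
  have hc : ∀ i k, Vp i (Fin.castSucc k) = α * ((if i = k then 1 else 0) - γ) := by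
    intro i k
    rw [hVp, dif_pos (by simp), ← hVe]; rfl
  have hl : ∀ i, Vp i (Fin.last n) = α * s := by
    intro i
    rw [hVp, dif_neg (by simp)]
    simp only [Matrix.mulVec, dotProduct, hVe, he, mul_one]
    rw [← Finset.mul_sum, Finset.sum_sub_distrib]
    simp
    rw [hγs]; field_simp; ring
  have hid : -2 * γ + n * γ ^ 2 + s ^ 2 = 0 := by
    have : -2 * γ + n * γ ^ 2 + s ^ 2 = (s ^ 2 * (n + 1) - 1) / n := by
      rw [hγs]; field_simp; ring
    rw [this, hs]; field_simp; simp
  have hG : ∀ i k, ∑ j, Vp i j * Vp k j = α ^ 2 * (if i = k then 1 else 0) := by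
    intro i k
    rw [Fin.sum_univ_castSucc, hl, hl]
    simp only [hc]
    have : ∀ j : Fin n, α * ((if i = j then (1:ℝ) else 0) - γ) * (α * ((if k = j then 1 else 0) - γ))
      = α ^ 2 * ((if i = j then (if k = j then (1:ℝ) else 0) else 0) - γ * (if i = j then (1:ℝ) else 0)
        - γ * (if k = j then (1:ℝ) else 0) + γ ^ 2) := by
      intro j; split_ifs <;> ring
    simp only [this]
    rw [← Finset.mul_sum, Finset.sum_add_distrib, Finset.sum_sub_distrib, Finset.sum_sub_distrib,
      ← Finset.mul_sum, ← Finset.mul_sum]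
    simp [eq_comm (a := k) (b := i)]
    split_ifs <;> linear_combination α ^ 2 * hid
  have hN : ∀ j, ∑ i, Vp i j ^ 2 = 1 := by
    intro j
    refine Fin.lastCases ?_ (fun k => ?_) j
    · simp [hl]
      rw [mul_pow, hα2, hs]; field_simp
    · simp only [hc]
      have : ∀ i : Fin n, (α * ((if i = k then (1:ℝ) else 0) - γ)) ^ 2
        = α ^ 2 * ((1 - 2 * γ) * (if i = k then (1:ℝ) else 0) + γ ^ 2) := by
        intro j; split_ifs <;> ring
      simp only [this]
      rw [← Finset.mul_sum, Finset.sum_add_distrib, ← Finset.mul_sum]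
      simp
      have h1 : 1 - 2 * γ + n * γ ^ 2 = 1 - 1 / (n + 1) := by linear_combination hid - hs
      rw [h1, hα2]; field_simp; ring
  have hdi : ∀ j i, (x j - x₀) i = h * Vp i j := by
    intro j i; simp [hx]
  have hdn : ∀ j, ‖x j - x₀‖ = h := by
    intro j
    rw [EuclideanSpace.norm_eq]
    simp only [hdi, Real.norm_eq_abs, sq_abs, mul_pow]
    rw [← Finset.mul_sum, hN, mul_one, Real.sqrt_sq hh.le]
  set G := gradient f x₀ with hGdef
  obtain ⟨r, hr⟩ : ∃ r : Fin (n + 1) → ℝ, ∀ j, r j = δ j - h * ∑ i, G i * Vp i j := ⟨_, fun _ => rfl⟩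
  have hrb : ∀ j, r j ^ 2 ≤ (L / 2 * h ^ 2) ^ 2 := by
    intro j
    have h1 := aux_taylor f Ω hΩopen x₀ (x j - x₀) h L (hdn j).le hball hf hLip
    rw [hdn, add_sub_cancel] at h1
    have h2 : inner ℝ G (x j - x₀) = h * ∑ i, G i * Vp i j := by
      rw [PiLp.inner_apply, Finset.mul_sum]
      refine Finset.sum_congr rfl fun i _ => ?_
      rw [hdi]; simp; ring
    rw [← hGdef, h2, ← hδ, ← hr] at h1
    exact sq_le_sq' (abs_le.mp h1).1 (abs_le.mp h1).2
  have hw : ∀ i, ∑ j, Vp i j * r j = h * α ^ 2 * (g i - G i) := by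
    intro i
    have h1 : ∑ j, Vp i j * δ j = h * α ^ 2 * g i := by
      rw [hg, Matrix.mulVec, dotProduct]
      have : h * α ^ 2 ≠ 0 := by rw [hα2]; positivity
      rw [← mul_assoc, mul_one_div_cancel this, one_mul]
    have h2 : ∑ j, Vp i j * (∑ k, G k * Vp k j) = α ^ 2 * G i := by
      simp only [Finset.mul_sum]
      rw [Finset.sum_comm]
      have : ∀ k, ∑ j, Vp i j * (G k * Vp k j) = G k * (α ^ 2 * (if i = k then 1 else 0)) := by
        intro k
        rw [← hG, Finset.mul_sum]
        exact Finset.sum_congr rfl fun _ _ => by ring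
      simp only [this]
      simp [mul_comm]
    have h3 : ∑ j, Vp i j * r j = ∑ j, Vp i j * δ j - h * ∑ j, Vp i j * (∑ k, G k * Vp k j) := by
      rw [Finset.mul_sum, ← Finset.sum_sub_distrib]
      exact Finset.sum_congr rfl fun j _ => by rw [hr]; ring
    rw [h3, h1, h2]; ring
  -- the least-squares projection inequality
  obtain ⟨q, hq⟩ : ∃ q : Fin n → ℝ, ∀ i, q i = g i - G i := ⟨_, fun _ => rfl⟩
  obtain ⟨u, hu⟩ : ∃ u : Fin (n + 1) → ℝ, ∀ j, u j = ∑ i, q i * Vp i j := ⟨_, fun _ => rfl⟩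
  have hur : ∑ j, u j * r j = h * α ^ 2 * ∑ i, q i ^ 2 := by
    simp only [hu, Finset.sum_mul]
    rw [Finset.sum_comm, Finset.mul_sum]
    refine Finset.sum_congr rfl fun i _ => ?_
    calc ∑ j, q i * Vp i j * r j = q i * ∑ j, Vp i j * r j := by
          rw [Finset.mul_sum]; exact Finset.sum_congr rfl fun _ _ => by ring
      _ = _ := by rw [hw, ← hq]; ring
  have huu : ∑ j, u j ^ 2 = α ^ 2 * ∑ i, q i ^ 2 := by
    have : ∀ j, u j ^ 2 = ∑ i, ∑ k, q i * q k * (Vp i j * Vp k j) := by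
      intro j
      rw [sq, hu, Finset.sum_mul_sum]
      exact Finset.sum_congr rfl fun _ _ => Finset.sum_congr rfl fun _ _ => by ring
    simp only [this]
    rw [Finset.sum_comm, Finset.mul_sum]
    refine Finset.sum_congr rfl fun i _ => ?_
    rw [Finset.sum_comm]
    simp only [← Finset.mul_sum, hG]
    simp
    ring
  have hpos : 0 ≤ ∑ j, (r j - h * u j) ^ 2 := Finset.sum_nonneg fun _ _ => sq_nonneg _
  have hexp : ∑ j, (r j - h * u j) ^ 2 = ∑ j, r j ^ 2 - 2 * h * ∑ j, u j * r j + h ^ 2 * ∑ j, u j ^ 2 := by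
    rw [Finset.mul_sum, Finset.mul_sum, ← Finset.sum_sub_distrib, ← Finset.sum_add_distrib]
    exact Finset.sum_congr rfl fun _ _ => by ring
  have hrs : ∑ j, r j ^ 2 ≤ (n + 1) * (L / 2 * h ^ 2) ^ 2 := by
    calc _ ≤ ∑ _j : Fin (n + 1), (L / 2 * h ^ 2) ^ 2 := Finset.sum_le_sum fun j _ => hrb j
      _ = _ := by simp
  rw [hexp, hur, huu] at hpos
  have hQ : h ^ 2 * ((n + 1) / n) * ∑ i, q i ^ 2 ≤ (n + 1) * (L / 2 * h ^ 2) ^ 2 := by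
    rw [← hα2]; linarith
  have hQ2 : ∑ i, q i ^ 2 ≤ (1 / 2 * L * h) ^ 2 * n := by
    have hk : 0 < h ^ 2 * (((n:ℝ) + 1) / n) := by positivity
    refine le_of_mul_le_mul_left (hQ.trans (le_of_eq ?_)) hk
    field_simp
  rw [norm_sub_rev, EuclideanSpace.norm_eq]
  have : ∑ i, ‖(g - G) i‖ ^ 2 = ∑ i, q i ^ 2 := by
    refine Finset.sum_congr rfl fun i _ => ?_
    rw [Real.norm_eq_abs, sq_abs, hq]; rfl
  rw [this]
  calc _ ≤ Real.sqrt ((1 / 2 * L * h) ^ 2 * n) := Real.sqrt_le_sqrt hQ2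
    _ = _ := by rw [Real.sqrt_mul (by positivity), Real.sqrt_sq (by positivity)]
end

section
/- Let n ≥ 1, h > 0, α = √((n+1)/n), γ = (1/n)(1 ± 1/√(n+1)), V = α(I − γ·e·eᵀ), and V₊ = [V, −V·e] with columns v₁, …, v_{n+1}. Let x₀ ∈ ℝⁿ, h > 0, and for each j = 1, …, n+1 let x_j = x₀ + h·v_j. Suppose f : ℝⁿ → ℝ is continuously differentiable on an open set containing the closed ball of radius h centered at x₀ with ∇f Lipschitz continuous there with constant L > 0. Then the vector δf₊ ∈ ℝ^{n+1} with entries f(x_j) − f(x₀) satisfies ‖δf₊ − h·V₊ᵀ·∇f(x₀)‖₂ ≤ (1/2)·L·h²·√(n+1). -/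
open Matrix

theorem taylor_aux {E : Type*} [NormedAddCommGroup E] [InnerProductSpace ℝ E] [CompleteSpace E]
    (f : E → ℝ) (Ω : Set E) (x₀ d : E) (h L : ℝ) (hΩ : IsOpen Ω)
    (hball : Metric.closedBall x₀ h ⊆ Ω) (hf : ContDiffOn ℝ 1 f Ω)
    (hLip : ∀ y ∈ Ω, ∀ z ∈ Ω, ‖gradient f y - gradient f z‖ ≤ L * ‖y - z‖)
    (hd : ‖d‖ = h) :
    |f (x₀ + d) - f x₀ - inner ℝ (gradient f x₀) d| ≤ 1 / 2 * L * h ^ 2 := by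
  have hmem : ∀ t ∈ Set.Icc (0 : ℝ) 1, x₀ + t • d ∈ Ω := by
    intro t ht
    apply hball
    rw [Metric.mem_closedBall, dist_eq_norm, add_sub_cancel_left, norm_smul, Real.norm_eq_abs,
      abs_of_nonneg ht.1, hd]
    have : 0 ≤ h := hd ▸ norm_nonneg d
    nlinarith [ht.2]
  have h0 : x₀ ∈ Ω := by simpa using hmem 0 (by simp)
  have hder : ∀ t ∈ Set.Icc (0 : ℝ) 1,
      HasDerivAt (fun t : ℝ => f (x₀ + t • d) - f x₀ - t * inner ℝ (gradient f x₀) d)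
        (inner ℝ (gradient f (x₀ + t • d) - gradient f x₀) d) t := by
    intro t ht
    have hfd : DifferentiableAt ℝ f (x₀ + t • d) :=
      (hf.differentiableOn one_ne_zero).differentiableAt (hΩ.mem_nhds (hmem t ht))
    have h1 := hfd.hasGradientAt.hasFDerivAt
    have h2 : HasDerivAt (fun t : ℝ => x₀ + t • d) d t := by
      simpa using ((hasDerivAt_id t).smul_const d).const_add x₀
    have h3 := h1.comp_hasDerivAt t h2
    have h4 := (h3.sub_const (f x₀)).sub
      ((hasDerivAt_id t).mul_const (inner ℝ (gradient f x₀) d))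
    refine HasDerivAt.congr_deriv h4 ?_
    simp [inner_sub_left]
  have hB : ∀ t : ℝ, HasDerivAt (fun t : ℝ => 1 / 2 * L * h ^ 2 * t ^ 2) (L * h ^ 2 * t) t := by
    intro t
    refine ((hasDerivAt_pow 2 t).const_mul (1 / 2 * L * h ^ 2)).congr_deriv ?_
    simp; ring
  have key := image_norm_le_of_norm_deriv_right_le_deriv_boundary (a := 0) (b := 1)
    (f := fun t : ℝ => f (x₀ + t • d) - f x₀ - t * inner ℝ (gradient f x₀) d)
    (fun t ht => (hder t ht).continuousAt.continuousWithinAt)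
    (fun t ht => (hder t ⟨ht.1, ht.2.le⟩).hasDerivWithinAt)
    (B := fun t : ℝ => 1 / 2 * L * h ^ 2 * t ^ 2) (B' := fun t => L * h ^ 2 * t)
    (by simp) hB ?_ (x := 1) (by simp)
  · simpa using key
  · intro t ht
    have h1 := hLip _ (hmem t ⟨ht.1, ht.2.le⟩) _ h0
    rw [add_sub_cancel_left, norm_smul, Real.norm_eq_abs, abs_of_nonneg ht.1, hd] at h1
    refine (norm_inner_le_norm _ _).trans ?_
    rw [hd]
    have : 0 ≤ h := hd ▸ norm_nonneg d
    calc _ ≤ L * (t * h) * h := by gcongr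
      _ = _ := by ring

/-- Taylor residual bound for the aligned regular simplex: the
vector with entries `f(x_j) − f(x₀)` satisfies
`‖δf₊ − h V₊ᵀ ∇f(x₀)‖₂ ≤ (1/2) L h² √(n+1)`. -/
theorem stmt_14 (n : ℕ) (hn : 1 ≤ n)
    (α γ h L : ℝ) (hh : 0 < h) (hL : 0 < L)
    (hα : α = Real.sqrt ((n + 1) / n))
    (hγ : γ = (1 / n) * (1 - 1 / Real.sqrt (n + 1)) ∨
          γ = (1 / n) * (1 + 1 / Real.sqrt (n + 1)))
    (e : Fin n → ℝ) (he : e = fun _ => 1)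
    (V : Matrix (Fin n) (Fin n) ℝ)
    (hV : V = α • ((1 : Matrix (Fin n) (Fin n) ℝ) - γ • Matrix.vecMulVec e e))
    (Vp : Matrix (Fin n) (Fin (n + 1)) ℝ)
    (hVp : ∀ (i : Fin n) (j : Fin (n + 1)),
      Vp i j = if hj : (j : ℕ) < n then V i ⟨j, hj⟩ else -(V.mulVec e i))
    (x₀ : EuclideanSpace ℝ (Fin n))
    (x : Fin (n + 1) → EuclideanSpace ℝ (Fin n))
    (hx : ∀ (j : Fin (n + 1)) (i : Fin n), x j i = x₀ i + h * Vp i j)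
    (f : EuclideanSpace ℝ (Fin n) → ℝ)
    (Ω : Set (EuclideanSpace ℝ (Fin n)))
    (hΩopen : IsOpen Ω)
    (hball : Metric.closedBall x₀ h ⊆ Ω)
    (hf : ContDiffOn ℝ 1 f Ω)
    (hLip : ∀ y ∈ Ω, ∀ z ∈ Ω, ‖gradient f y - gradient f z‖ ≤ L * ‖y - z‖)
    (δ : Fin (n + 1) → ℝ)
    (hδ : ∀ j, δ j = f (x j) - f x₀)
    (r : EuclideanSpace ℝ (Fin (n + 1)))
    (hr : ∀ j, r j = δ j - h * Vpᵀ.mulVec (fun i => gradient f x₀ i) j) :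
    ‖r‖ ≤ (1 / 2) * L * h ^ 2 * Real.sqrt (n + 1) := by
  have hn0 : (0 : ℝ) < n := by exact_mod_cast hn
  have hα2 : α ^ 2 = (n + 1) / n := by
    rw [hα, Real.sq_sqrt (by positivity)]
  have hs : (1 / Real.sqrt ((n : ℝ) + 1)) ^ 2 = 1 / (n + 1) := by
    rw [div_pow, Real.sq_sqrt (by positivity), one_pow]
  have hγ2 : (1 - n * γ) ^ 2 = 1 / (n + 1) := by
    rw [← hs]
    rcases hγ with hγ | hγ <;> rw [hγ] <;> field_simp <;> ring
  have hVe : ∀ i k, V i k = α * ((if i = k then 1 else 0) - γ) := by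
    intro i k
    simp [hV, he, Matrix.vecMulVec_apply, Matrix.one_apply]
  have hVs : ∀ i, V.mulVec e i = α * (1 - n * γ) := by
    intro i
    simp only [Matrix.mulVec, dotProduct, hVe, he, mul_one]
    rw [← Finset.mul_sum, Finset.sum_sub_distrib]
    simp
  have hcol : ∀ j, ∑ i, (Vp i j) ^ 2 = 1 := by
    intro j
    by_cases hj : (j : ℕ) < n
    · have : ∀ i, Vp i j ^ 2 = α ^ 2 * ((if i = (⟨j, hj⟩ : Fin n) then 1 - 2 * γ else 0) + γ ^ 2) := by
        intro i
        rw [hVp, dif_pos hj, hVe]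
        split_ifs <;> ring
      simp only [this]
      rw [← Finset.mul_sum, Finset.sum_add_distrib, hα2]
      simp only [Finset.sum_ite_eq', Finset.mem_univ, if_true, Finset.sum_const, Finset.card_univ,
        Fintype.card_fin, nsmul_eq_mul]
      field_simp
      field_simp at hγ2
      have : (n : ℝ) * ((n + 1) * (1 - 2 * γ + n * γ ^ 2)) = n * n := by linarith
      exact mul_left_cancel₀ hn0.ne' this
    · have : ∀ i, Vp i j ^ 2 = α ^ 2 * (1 - n * γ) ^ 2 := by
        intro i
        rw [hVp, dif_neg hj, hVs]
        ring
      simp only [this, hα2, hγ2]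
      simp
      field_simp
  have hnorm : ∀ j, ‖x j - x₀‖ = h := by
    intro j
    rw [EuclideanSpace.norm_eq]
    have : ∑ i, ‖(x j - x₀) i‖ ^ 2 = h ^ 2 := by
      simp only [PiLp.sub_apply, hx, add_sub_cancel_left, Real.norm_eq_abs, sq_abs, mul_pow]
      rw [← Finset.mul_sum, hcol, mul_one]
    rw [this, Real.sqrt_sq hh.le]
  have hrj : ∀ j, |r j| ≤ 1 / 2 * L * h ^ 2 := by
    intro j
    have := taylor_aux f Ω x₀ (x j - x₀) h L hΩopen hball hf hLip (hnorm j)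
    rw [add_sub_cancel] at this
    have hin : inner ℝ (gradient f x₀) (x j - x₀)
        = h * Vpᵀ.mulVec (fun i => gradient f x₀ i) j := by
      simp only [PiLp.inner_apply, PiLp.sub_apply, hx, add_sub_cancel_left, Matrix.mulVec,
        dotProduct, Matrix.transpose_apply, Finset.mul_sum]
      refine Finset.sum_congr rfl fun i _ => ?_
      simp
      ring
    rw [hr, hδ, ← hin]
    exact this
  rw [EuclideanSpace.norm_eq]
  have hC : 0 ≤ 1 / 2 * L * h ^ 2 := by positivity
  refine Real.sqrt_le_iff.2 ⟨by positivity, ?_⟩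
  rw [mul_pow, Real.sq_sqrt (by positivity)]
  calc ∑ j, ‖r j‖ ^ 2 ≤ ∑ j : Fin (n + 1), (1 / 2 * L * h ^ 2) ^ 2 := by
        refine Finset.sum_le_sum fun j _ => ?_
        exact pow_le_pow_left₀ (norm_nonneg _) (hrj j) 2
    _ = _ := by simp; ring
end

section
/- Let n ≥ 1, α = √((n+1)/n), β = 1/(n+1), γ = (1/n)(1 ± √β), V = α(I − γ·e·eᵀ), and V₊ = [V, −V·e] ∈ ℝ^{n×(n+1)}. Then the spectral (operator 2-) norm of V₊ equals α. -/
open Matrix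
open scoped Matrix.Norms.L2Operator

/-- The spectral (operator 2-) norm of `V₊ = [V, −Ve]`, viewed as
a linear map from Euclidean ℝ^{n+1} to Euclidean ℝⁿ, equals `α`. -/
theorem stmt_15 (n : ℕ) (hn : 1 ≤ n)
    (α β γ : ℝ)
    (hα : α = Real.sqrt ((n + 1) / n))
    (hβ : β = 1 / (n + 1))
    (hγ : γ = (1 / n) * (1 - Real.sqrt β) ∨ γ = (1 / n) * (1 + Real.sqrt β))
    (e : Fin n → ℝ) (he : e = fun _ => 1)
    (V : Matrix (Fin n) (Fin n) ℝ)
    (hV : V = α • ((1 : Matrix (Fin n) (Fin n) ℝ) - γ • Matrix.vecMulVec e e))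
    (Vp : Matrix (Fin n) (Fin (n + 1)) ℝ)
    (hVp : ∀ (i : Fin n) (j : Fin (n + 1)),
      Vp i j = if hj : (j : ℕ) < n then V i ⟨j, hj⟩ else -(V.mulVec e i)) :
    ‖LinearMap.toContinuousLinearMap (Matrix.toEuclideanLin Vp)‖ = α := by
  have hn0 : (0 : ℝ) < n := by exact_mod_cast hn
  have hα2 : α * α = (n + 1) / n := by
    rw [hα]; exact Real.mul_self_sqrt (by positivity)
  have hα0 : 0 ≤ α := by rw [hα]; exact Real.sqrt_nonneg _
  have hβ0 : 0 ≤ β := by rw [hβ]; positivity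
  have hs : Real.sqrt β * Real.sqrt β = 1 / (n + 1) := by
    rw [Real.mul_self_sqrt hβ0, hβ]
  have hg : (1 - γ * n) * (1 - γ * n) * (n + 1) = 1 := by
    have h1 : (1 - γ * n) * (1 - γ * n) = Real.sqrt β * Real.sqrt β := by
      rcases hγ with h | h
      · have : γ * n = 1 - Real.sqrt β := by rw [h]; field_simp
        rw [this]; ring
      · have : γ * n = 1 + Real.sqrt β := by rw [h]; field_simp
        rw [this]; ring
    rw [h1, hs]; field_simp
  have hVe : ∀ i j, V i j = α * ((if i = j then 1 else 0) - γ) := by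
    intro i j
    rw [hV, he]
    simp [Matrix.vecMulVec_apply, Matrix.one_apply]
  have hVs : ∀ i, V.mulVec e i = α * (1 - γ * n) := by
    intro i
    simp only [Matrix.mulVec, dotProduct, hVe, he, mul_one]
    rw [← Finset.mul_sum, Finset.sum_sub_distrib]
    simp
    left; ring
  have hmul : Vp * Vpᴴ = (α * α) • (1 : Matrix (Fin n) (Fin n) ℝ) := by
    ext i k
    simp only [Matrix.mul_apply, Matrix.conjTranspose_apply, star_trivial, Fin.sum_univ_castSucc]
    have hc : ∀ (i j : Fin n), Vp i j.castSucc = α * ((if i = j then 1 else 0) - γ) := by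
      intro i j
      rw [hVp, dif_pos (by simp)]
      exact hVe i j
    have hl : ∀ (i : Fin n), Vp i (Fin.last n) = - (α * (1 - γ * n)) := by
      intro i
      rw [hVp, dif_neg (by simp), hVs]
    simp only [hc, hl]
    have hsum : ∑ j : Fin n, α * ((if i = j then (1 : ℝ) else 0) - γ)
          * (α * ((if k = j then (1 : ℝ) else 0) - γ))
        = α * α * ((if i = k then 1 else 0) - 2 * γ + n * γ * γ) := by
      have : ∀ j : Fin n, α * ((if i = j then (1 : ℝ) else 0) - γ)
          * (α * ((if k = j then (1 : ℝ) else 0) - γ))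
          = α * α * ((if i = j then (if k = j then (1 : ℝ) else 0) else 0)
            - γ * (if i = j then (1 : ℝ) else 0) - γ * (if k = j then (1 : ℝ) else 0) + γ * γ) := by
        intro j
        split_ifs <;> ring
      simp only [this]
      rw [← Finset.mul_sum, Finset.sum_add_distrib, Finset.sum_sub_distrib,
        Finset.sum_sub_distrib, ← Finset.mul_sum, ← Finset.mul_sum]
      simp only [Finset.sum_ite_eq, Finset.mem_univ, if_true, Finset.sum_const, Finset.card_univ,
        Fintype.card_fin, nsmul_eq_mul, eq_comm (a := k) (b := i)]
      ring
    rw [hsum]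
    simp only [Matrix.smul_apply, Matrix.one_apply, smul_eq_mul]
    have hg2 : -2 * γ + n * γ * γ + (1 - γ * n) * (1 - γ * n) = 0 := by
      have : (n : ℝ) * (-2 * γ + n * γ * γ + (1 - γ * n) * (1 - γ * n)) = 0 := by
        linear_combination hg
      exact (mul_eq_zero.mp this).resolve_left hn0.ne'
    linear_combination α * α * hg2
  have hnorm := Matrix.l2_opNorm_conjTranspose_mul_self Vpᴴ
  rw [Matrix.conjTranspose_conjTranspose, hmul, Matrix.l2_opNorm_conjTranspose, norm_smul] at hnorm
  haveI : Nonempty (Fin n) := ⟨⟨0, hn⟩⟩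
  rw [CStarRing.norm_one, mul_one, Real.norm_of_nonneg (mul_nonneg hα0 hα0)] at hnorm
  have := (mul_self_inj hα0 (norm_nonneg Vp)).mp hnorm
  rw [Matrix.l2_opNorm_def] at this
  exact this.symm
end

section
/- Let n ≥ 1, α = √((n+1)/n), γ = (1/n)(1 ± 1/√(n+1)), V = α(I − γ·e·eᵀ) ∈ ℝ^{n×n}, and let Q ∈ ℝ^{n×n} be an orthogonal matrix. Set Y = Q·V. Then Y·Yᵀ = α²·I − Y·e·eᵀ·Yᵀ. -/
open Matrix

/-- If `Q` is orthogonal and `Y = QV` with `V = α(I − γ e eᵀ)`,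
then `Y Yᵀ = α² I − Y e eᵀ Yᵀ`. -/
theorem stmt_17 (n : ℕ) (hn : 1 ≤ n)
    (α γ : ℝ)
    (hα : α = Real.sqrt ((n + 1) / n))
    (hγ : γ = (1 / n) * (1 - 1 / Real.sqrt (n + 1)) ∨
          γ = (1 / n) * (1 + 1 / Real.sqrt (n + 1)))
    (e : Fin n → ℝ) (he : e = fun _ => 1)
    (V : Matrix (Fin n) (Fin n) ℝ)
    (hV : V = α • ((1 : Matrix (Fin n) (Fin n) ℝ) - γ • Matrix.vecMulVec e e))
    (Q : Matrix (Fin n) (Fin n) ℝ) (hQ : Qᵀ * Q = 1)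
    (Y : Matrix (Fin n) (Fin n) ℝ) (hY : Y = Q * V) :
    Y * Yᵀ = α ^ 2 • (1 : Matrix (Fin n) (Fin n) ℝ) - Y * Matrix.vecMulVec e e * Yᵀ := by
  have hn0 : (n : ℝ) ≠ 0 := by
    have : n ≠ 0 := by omega
    exact_mod_cast this
  have hn1 : (0 : ℝ) < n + 1 := by positivity
  have hs : Real.sqrt (n + 1) ^ 2 = (n : ℝ) + 1 := Real.sq_sqrt hn1.le
  have hs0 : Real.sqrt ((n : ℝ) + 1) ≠ 0 := (Real.sqrt_pos.2 hn1).ne'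
  have h1 : (1 - γ * n) ^ 2 * (n + 1) = 1 := by
    rw [← hs]
    rcases hγ with h | h <;> rw [h] <;> field_simp <;> ring
  have key : -2 * γ + γ ^ 2 * n + (1 - γ * n) ^ 2 = 0 := by
    have : (n : ℝ) * (-2 * γ + γ ^ 2 * n + (1 - γ * n) ^ 2) = 0 := by linear_combination h1
    exact (mul_eq_zero.1 this).resolve_left hn0
  have hJt : (Matrix.vecMulVec e e)ᵀ = Matrix.vecMulVec e e := by
    rw [Matrix.transpose_vecMulVec]
  have hJJ : Matrix.vecMulVec e e * Matrix.vecMulVec e e = (n : ℝ) • Matrix.vecMulVec e e := by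
    ext i j
    simp [Matrix.mul_apply, Matrix.vecMulVec_apply, he]
  have hQ' : Q * Qᵀ = 1 := mul_eq_one_comm.1 hQ
  generalize Matrix.vecMulVec e e = J at *
  have hVV : V * Vᵀ + V * J * Vᵀ = α ^ 2 • (1 : Matrix (Fin n) (Fin n) ℝ) := by
    have : V * Vᵀ + V * J * Vᵀ = α ^ 2 • (1 : Matrix (Fin n) (Fin n) ℝ)
        + (α ^ 2 * (-2 * γ + γ ^ 2 * n + (1 - γ * n) ^ 2)) • J := by
      rw [hV]
      simp only [Matrix.transpose_smul, Matrix.transpose_sub, Matrix.transpose_one, hJt,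
        Matrix.smul_mul, Matrix.mul_smul, Matrix.sub_mul, Matrix.mul_sub, Matrix.one_mul,
        Matrix.mul_one, hJJ]
      module
    rw [this, key]; simp
  rw [eq_sub_iff_add_eq]
  calc Y * Yᵀ + Y * J * Yᵀ = Q * (V * Vᵀ + V * J * Vᵀ) * Qᵀ := by
        rw [hY]
        simp only [Matrix.transpose_mul, Matrix.mul_add, Matrix.add_mul, Matrix.mul_assoc]
    _ = _ := by rw [hVV]; simp [hQ']
end
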